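/- There do not exist positive integers a₁, a₂, a₃, an odd irreducible polynomial R ∈ F₂[x], and pairwise distinct odd irreducible polynomials P₁, P₂, P₃ ∈ F₂[x] such that, setting B = x^{a₁}(x+1)^{a₂}R^{a₃}, one has both σ(B²) = P₁P₂P₃ and (P₁+1)(P₂+1)(P₃+1) = B². -/

import Mathlib

/-!
Multiplicativity gives `σ(B²) = Q₁ Q₂ Q₃` with `Q₁ = σ(x^{2a₁})`, `Q₂ = σ((x+1)^{2a₂})`,
`Q₃ = σ(R^{2a₃})` (`divisors_prime_pow_mul`). None of the `Qᵢ` is a unit, and the product has exactly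
three irreducible factors, so `Q₁, Q₂, Q₃` are `P₁, P₂, P₃` up to order (`triple_eq`), and hence
`(Q₁ + 1)(Q₂ + 1)(Q₃ + 1) = B²`. In characteristic two a geometric sum `Q = 1 + p + ⋯ + p^{2a}`
satisfies `(Q + 1)(p + 1) = p (p^a + 1)²` (`geom_add_one`). Multiplying the three instances and
cancelling `x (x + 1)` leaves `(R + 1) B² = R S²` with `S ≠ 0`. As `R` does not divide `R + 1`, it
occurs to an even power on the left and to an odd power on the right, a contradiction.
-/

open Polynomial

/-- The sum of all divisors of a polynomial over `F₂` (junk value `0` when the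
divisor set is infinite, i.e. for `A = 0`). -/
noncomputable def sigma (A : Polynomial (ZMod 2)) : Polynomial (ZMod 2) :=
  ∑ᶠ (D : Polynomial (ZMod 2)) (_ : D ∣ A), D

/-- A binary polynomial is odd if it evaluates to `1` at both `0` and `1`. -/
def IsOdd (B : Polynomial (ZMod 2)) : Prop := B.eval 0 = 1 ∧ B.eval 1 = 1

/-- A binary polynomial is even if it is not odd. -/
def IsEven (B : Polynomial (ZMod 2)) : Prop := ¬ IsOdd B

/-- The ring `F₂[x]`. -/
abbrev BinPoly := Polynomial (ZMod 2)

theorem binPoly_two_eq_zero : (2 : BinPoly) = 0 := CharTwo.two_eq_zero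

/-- `1` is the only unit of `F₂[x]`, so associated polynomials are equal. -/
instance units_subsingleton : Subsingleton BinPolyˣ := by
  refine ⟨fun u v => ?_⟩
  have h : ∀ w : BinPolyˣ, (w : BinPoly) = 1 := by
    intro w
    obtain ⟨r, hr, hw⟩ := Polynomial.isUnit_iff.1 w.isUnit
    have : r = 1 := by
      have h0 := hr.ne_zero
      revert h0
      clear hw hr
      revert r
      decide
    rw [← hw, this, map_one]
  exact Units.ext ((h u).trans (h v).symm)

theorem sigma_eq_sum {A : BinPoly} {s : Finset BinPoly} (hs : ∀ D, D ∈ s ↔ D ∣ A) :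
    sigma A = ∑ D ∈ s, D := by
  unfold sigma
  simp_rw [← hs]
  exact finsum_mem_coe_finset _ s

/-- Adjoining a new prime power to a polynomial multiplies the divisor sum by a geometric sum. The
divisor set is carried along as a finset, so that finiteness propagates together with the sum. -/
theorem divisors_prime_pow_mul {A p : BinPoly} (hp : Prime p) (hpA : ¬ p ∣ A) (n : ℕ)
    {s : Finset BinPoly} (hs : ∀ D, D ∈ s ↔ D ∣ A) :
    ∃ t : Finset BinPoly, (∀ D, D ∈ t ↔ D ∣ p ^ n * A) ∧
      ∑ D ∈ t, D = (∑ i ∈ Finset.range (n + 1), p ^ i) * ∑ D ∈ s, D := by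
  classical
  refine ⟨(Finset.range (n + 1) ×ˢ s).image fun q => p ^ q.1 * q.2, fun D => ?_, ?_⟩
  · simp only [Finset.mem_image, Finset.mem_product, Finset.mem_range, Prod.exists, hs]
    constructor
    · rintro ⟨i, d, ⟨hi, hd⟩, rfl⟩
      exact mul_dvd_mul (pow_dvd_pow _ (by omega)) hd
    · intro h
      obtain ⟨a, b, ha, hb, rfl⟩ := exists_dvd_and_dvd_of_dvd_mul h
      obtain ⟨i, hi, hai⟩ := (dvd_prime_pow hp n).1 ha
      exact ⟨i, b, ⟨by omega, hb⟩, by rw [associated_iff_eq.1 hai]⟩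
  · rw [Finset.sum_image, Finset.sum_product, Finset.sum_mul_sum]
    rintro ⟨i, d⟩ hd ⟨j, e⟩ he h
    simp only [Finset.coe_product, Set.mem_prod, Finset.mem_coe, hs] at hd he h
    have key : ∀ {i j : ℕ} {d e : BinPoly}, d ∣ A → p ^ i * d = p ^ j * e → ¬ i < j := by
      intro i j d e hd h hij
      obtain ⟨k, rfl⟩ := Nat.exists_eq_add_of_lt hij
      have : d = p * (p ^ k * e) := by
        apply mul_left_cancel₀ (pow_ne_zero i hp.ne_zero)
        rw [h]; ring
      exact hpA ((Dvd.intro _ this.symm).trans hd)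
    have hij : i = j := le_antisymm (not_lt.1 (key he.2 h.symm)) (not_lt.1 (key hd.2 h))
    subst hij
    rw [mul_left_cancel₀ (pow_ne_zero i hp.ne_zero) h]

theorem geom_add_one (p : BinPoly) (a : ℕ) :
    ((∑ i ∈ Finset.range (2 * a + 1), p ^ i) + 1) * (p + 1) = p * (p ^ a + 1) ^ 2 := by
  have h := geom_sum_mul p (2 * a + 1)
  linear_combination h + ((∑ i ∈ Finset.range (2 * a + 1), p ^ i) - p * p ^ a) * binPoly_two_eq_zero

theorem geom_not_isUnit {p : BinPoly} (hp : Prime p) {a : ℕ} (ha : 0 < a) :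
    ¬ IsUnit (∑ i ∈ Finset.range (2 * a + 1), p ^ i) := by
  intro h
  have h1 := geom_sum_mul p (2 * a + 1)
  rw [isUnit_iff_eq_one.1 h] at h1
  have h2 : p * p ^ (2 * a) = p * 1 := by linear_combination -h1
  have h3 := mul_left_cancel₀ hp.ne_zero h2
  exact hp.not_isUnit (IsUnit.of_pow_eq_one h3 (by omega))

open UniqueFactorizationMonoid in
/-- A factorization of a product of three irreducibles into three nonunits is a rearrangement of
those irreducibles. -/
theorem triple_eq {P₁ P₂ P₃ Q₁ Q₂ Q₃ : BinPoly} (h₁ : Irreducible P₁) (h₂ : Irreducible P₂)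
    (h₃ : Irreducible P₃) (q₁ : ¬ IsUnit Q₁) (q₂ : ¬ IsUnit Q₂) (q₃ : ¬ IsUnit Q₃)
    (h : Q₁ * Q₂ * Q₃ = P₁ * P₂ * P₃) :
    ({Q₁} + {Q₂} + {Q₃} : Multiset BinPoly) = {P₁} + {P₂} + {P₃} := by
  have hne : Q₁ * Q₂ * Q₃ ≠ 0 := by
    rw [h]; exact mul_ne_zero (mul_ne_zero h₁.ne_zero h₂.ne_zero) h₃.ne_zero
  have n₃ := right_ne_zero_of_mul hne
  have n₂ := right_ne_zero_of_mul (left_ne_zero_of_mul hne)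
  have n₁ := left_ne_zero_of_mul (left_ne_zero_of_mul hne)
  have hirr : ∀ {P : BinPoly}, Irreducible P → normalizedFactors P = {P} := fun hP => by
    rw [normalizedFactors_irreducible hP, associated_iff_eq.1 (normalize_associated _)]
  have hm : normalizedFactors Q₁ + normalizedFactors Q₂ + normalizedFactors Q₃
      = {P₁} + {P₂} + {P₃} := by
    rw [← hirr h₁, ← hirr h₂, ← hirr h₃, ← normalizedFactors_mul n₁ n₂,
      ← normalizedFactors_mul (mul_ne_zero n₁ n₂) n₃, h,
      normalizedFactors_mul (mul_ne_zero h₁.ne_zero h₂.ne_zero) h₃.ne_zero,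
      normalizedFactors_mul h₁.ne_zero h₂.ne_zero]
  have hpos : ∀ {Q : BinPoly}, Q ≠ 0 → ¬ IsUnit Q → 0 < (normalizedFactors Q).card := fun h0 hu =>
    Multiset.card_pos.2 fun he => hu ((normalizedFactors_eq_zero_iff h0).1 he)
  have hone : ∀ {Q : BinPoly}, Q ≠ 0 → (normalizedFactors Q).card = 1 →
      normalizedFactors Q = {Q} := by
    intro Q h0 hc
    obtain ⟨q, hq⟩ := Multiset.card_eq_one.1 hc
    have := associated_iff_eq.1 (prod_normalizedFactors h0)
    rw [hq, Multiset.prod_singleton] at this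
    rw [hq, this]
  have hc := congrArg Multiset.card hm
  simp only [Multiset.card_add, Multiset.card_singleton] at hc
  have p₁ := hpos n₁ q₁
  have p₂ := hpos n₂ q₂
  have p₃ := hpos n₃ q₃
  rwa [hone n₁ (by omega), hone n₂ (by omega), hone n₃ (by omega)] at hm

/-- The prime `R` occurs to an even power on the left and to an odd power on the right. -/
theorem parity {R T B S : BinPoly} (hR : Prime R) (hT : ¬ R ∣ T) (hB : B ≠ 0) (hS : S ≠ 0) :
    T * B ^ 2 ≠ R * S ^ 2 := by
  intro h
  have hT0 : T ≠ 0 := fun h0 => hT (h0 ▸ dvd_zero R)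
  have fin : ∀ {A : BinPoly}, A ≠ 0 → FiniteMultiplicity R A := fun hA =>
    FiniteMultiplicity.of_prime_left hR hA
  have hmul := congrArg (multiplicity R) h
  rw [multiplicity_mul hR (fin (mul_ne_zero hT0 (pow_ne_zero 2 hB))),
    multiplicity_mul hR (fin (mul_ne_zero hR.ne_zero (pow_ne_zero 2 hS))),
    (fin hB).multiplicity_pow hR, (fin hS).multiplicity_pow hR,
    multiplicity_eq_zero.2 hT, multiplicity_self] at hmul
  omega

/-- The case `ω(B) = 3` in the proof of the main theorem does not occur: there
are no positive integers `a₁, a₂, a₃`, odd irreducible `R`, and pairwise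
distinct odd irreducibles `P₁, P₂, P₃` with `B = x^{a₁}(x+1)^{a₂}R^{a₃}`,
`σ(B²) = P₁P₂P₃` and `(P₁+1)(P₂+1)(P₃+1) = B²`. -/
theorem statement19 :
    ¬ ∃ (a₁ a₂ a₃ : ℕ) (R P₁ P₂ P₃ : Polynomial (ZMod 2)),
      0 < a₁ ∧ 0 < a₂ ∧ 0 < a₃ ∧
      Irreducible R ∧ IsOdd R ∧
      Irreducible P₁ ∧ IsOdd P₁ ∧
      Irreducible P₂ ∧ IsOdd P₂ ∧
      Irreducible P₃ ∧ IsOdd P₃ ∧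
      P₁ ≠ P₂ ∧ P₁ ≠ P₃ ∧ P₂ ≠ P₃ ∧
      sigma ((X ^ a₁ * (X + 1) ^ a₂ * R ^ a₃) ^ 2) = P₁ * P₂ * P₃ ∧
      (P₁ + 1) * (P₂ + 1) * (P₃ + 1) = (X ^ a₁ * (X + 1) ^ a₂ * R ^ a₃) ^ 2 := by
  rintro ⟨a₁, a₂, a₃, R, P₁, P₂, P₃, ha₁, ha₂, ha₃, hRi, ⟨hR0, hR1⟩, h₁, -, h₂, -, h₃, -, -, -, -,
    hσ, hB⟩
  have hR : Prime R := hRi.prime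
  have hX : Prime (X : BinPoly) := prime_X
  have hC : (X : BinPoly) - Polynomial.C 1 = X + 1 := by
    rw [map_one]; linear_combination -binPoly_two_eq_zero
  have hY : Prime (X + 1 : BinPoly) := hC ▸ prime_X_sub_C 1
  have hXR : ¬ (X : BinPoly) ∣ R := fun h => by
    rw [X_dvd_iff, coeff_zero_eq_eval_zero, hR0] at h
    exact one_ne_zero h
  have hYR : ¬ (X + 1 : BinPoly) ∣ R := fun h => by
    rw [← hC, dvd_iff_isRoot, IsRoot.def, hR1] at h
    exact one_ne_zero h
  have hXY : ¬ (X : BinPoly) ∣ X + 1 := fun h =>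
    hX.not_isUnit (isUnit_of_dvd_one ((dvd_add_right dvd_rfl).1 h))
  have hRR : ¬ R ∣ R + 1 := fun h => hR.not_isUnit (isUnit_of_dvd_one ((dvd_add_right dvd_rfl).1 h))
  have d₀ : ∀ D : BinPoly, D ∈ ({1} : Finset BinPoly) ↔ D ∣ 1 := fun D => by
    rw [Finset.mem_singleton, ← isUnit_iff_dvd_one, isUnit_iff_eq_one]
  obtain ⟨s₃, d₃, e₃⟩ := divisors_prime_pow_mul hR
    (fun h => hR.not_isUnit (isUnit_of_dvd_one h)) (2 * a₃) d₀
  obtain ⟨s₂, d₂, e₂⟩ := divisors_prime_pow_mul hY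
    (by rw [mul_one]; exact fun h => hYR (hY.dvd_of_dvd_pow h)) (2 * a₂) d₃
  obtain ⟨s₁, d₁, e₁⟩ := divisors_prime_pow_mul hX
    (by
      rw [mul_one]
      exact fun h => (hX.dvd_or_dvd h).elim (fun h => hXY (hX.dvd_of_dvd_pow h))
        (fun h => hXR (hX.dvd_of_dvd_pow h))) (2 * a₁) d₂
  have hBB : (X ^ a₁ * (X + 1) ^ a₂ * R ^ a₃) ^ 2
      = (X ^ (2 * a₁) * ((X + 1) ^ (2 * a₂) * (R ^ (2 * a₃) * 1)) : BinPoly) := by ring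
  rw [hBB, sigma_eq_sum d₁, e₁, e₂, e₃, Finset.sum_singleton, mul_one, ← mul_assoc] at hσ
  have g₁ := geom_add_one X a₁
  have g₂ := geom_add_one (X + 1) a₂
  have g₃ := geom_add_one R a₃
  have hm := triple_eq h₁ h₂ h₃ (geom_not_isUnit hX ha₁) (geom_not_isUnit hY ha₂)
    (geom_not_isUnit hR ha₃) hσ
  have hprod := congrArg (fun m : Multiset BinPoly => (m.map (· + 1)).prod) hm
  simp only [Multiset.map_add, Multiset.map_singleton, Multiset.prod_add,
    Multiset.prod_singleton] at hprod
  rw [← hprod] at hB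
  have hX1 : (X + 1 + 1 : BinPoly) = X := by linear_combination binPoly_two_eq_zero
  rw [hX1] at g₂
  have hne : ∀ {p : BinPoly}, Prime p → ∀ {a : ℕ}, 0 < a → p ^ a + 1 ≠ 0 := by
    intro p hp a ha h
    have h1 : p ^ a = (1 : BinPoly) := by linear_combination h - binPoly_two_eq_zero
    exact hp.not_isUnit (IsUnit.of_pow_eq_one h1 ha.ne')
  refine parity (B := X ^ a₁ * (X + 1) ^ a₂ * R ^ a₃)
    (S := (X ^ a₁ + 1) * ((X + 1) ^ a₂ + 1) * (R ^ a₃ + 1)) hR hRR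
    (mul_ne_zero (mul_ne_zero (pow_ne_zero _ hX.ne_zero) (pow_ne_zero _ hY.ne_zero))
      (pow_ne_zero _ hR.ne_zero))
    (mul_ne_zero (mul_ne_zero (hne hX ha₁) (hne hY ha₂)) (hne hR ha₃)) ?_
  -- The factor `X * (X + 1)` comes from multiplying `g₁`, `g₂` and `g₃`.
  apply mul_left_cancel₀ (mul_ne_zero hX.ne_zero hY.ne_zero)
  rw [← hB]
  have := congrArg₂ (· * ·) (congrArg₂ (· * ·) g₁ g₂) g₃
  linear_combination this
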